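/- Let 𝕏 be a σ-finite measure space and ℳ, 𝒩 Banach L^0(𝕏)-modules. For any tensor α = Σ_{i=1}^n v_i ⊗ w_i ∈ ℳ ⊗ 𝒩, the operators L_α : ℳ* → 𝒩 defined by L_α(ω) := Σ_{i=1}^n ω(v_i)·w_i and R_α : 𝒩* → ℳ defined by R_α(η) := Σ_{i=1}^n η(w_i)·v_i are well defined (independent of the chosen representation of α) and belong to Hom(ℳ*;𝒩) and Hom(𝒩*;ℳ) respectively. Moreover, the maps α ↦ L_α and α ↦ R_α satisfy |L_α| = |R_α| = |α|_ε on ℳ ⊗ 𝒩, and hence extend uniquely to pointwise-norm-preserving homomorphisms defined on the injective tensor product ℳ ⊗̂_ε 𝒩, with values in Hom(ℳ*;𝒩) and Hom(𝒩*;ℳ) respectively. -/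

import Mathlib

/-!
The norm identity `|L_α| = |α|_ε` says that `|L_α(ω)|` is the supremum of `|η(L_α(ω))|` over
`η ∈ 𝔻_{𝒩*}`, which is the Hahn–Banach theorem for `L⁰`-modules, together with the fact that the
pointwise norm of `L_α` may be tested on the unit disc of `ℳ*` only: a functional `ω` equals `|ω|`
times a functional of the unit disc, obtained by multiplying `ω` by the pointwise inverse of `|ω|`
on `{|ω| > 0}`. Hahn–Banach is proved by Zorn's lemma as for vector spaces; suprema of real numbers
become lattice suprema in `L⁰`, which is Dedekind complete, and the sign of a scalar is discussed
after localizing to `{h > 0}`, `{h < 0}` and `{h = 0}`. For a fixed `ω` the map `α ↦ L_α(ω)` is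
then bounded by `|ω| |α|_ε`, so it extends by density, and the norm identity passes to the limit.
The statements on `R_α` follow by exchanging the two factors of the tensor product.
-/

open MeasureTheory Filter Set TensorProduct

noncomputable section

namespace Paper

variable {X : Type*} [MeasurableSpace X]

/-- The space `L⁰(𝕏)` of real-valued measurable functions up to `μ`-a.e. equality. -/
abbrev L0 (μ : Measure X) : Type _ := X →ₘ[μ] ℝ

instance (μ : Measure X) : CommRing (L0 μ) :=
  { (inferInstance : AddCommGroup (L0 μ)), (inferInstance : CommMonoid (L0 μ)) with
    left_distrib := fun a b c => AEEqFun.toGerm_injective <| by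
      simp only [AEEqFun.mul_toGerm, AEEqFun.add_toGerm, mul_add]
    right_distrib := fun a b c => AEEqFun.toGerm_injective <| by
      simp only [AEEqFun.mul_toGerm, AEEqFun.add_toGerm, add_mul]
    zero_mul := fun a => AEEqFun.toGerm_injective <| by
      simp only [AEEqFun.mul_toGerm, AEEqFun.zero_toGerm, zero_mul]
    mul_zero := fun a => AEEqFun.toGerm_injective <| by
      simp only [AEEqFun.mul_toGerm, AEEqFun.zero_toGerm, mul_zero] }

/-- The distance on `L⁰(𝕏)` inducing the topology of convergence in measure, defined through
the auxiliary finite measure `μ.toFinite` (which satisfies `μ ≪ μ.toFinite ≪ μ`). -/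
noncomputable def dL0 (μ : Measure X) [SFinite μ] (f g : L0 μ) : ℝ :=
  ∫ x, min |f x - g x| 1 ∂(μ.toFinite)

/-- A Banach `L⁰(𝕏)`-module: a module over `L⁰(𝕏)` endowed with a pointwise norm, complete
with respect to the induced distance. -/
class BanachMod (μ : Measure X) [SFinite μ] (M : Type*) [AddCommGroup M]
    [Module (L0 μ) M] where
  pn : M → L0 μ
  pn_nonneg : ∀ v : M, 0 ≤ pn v
  pn_eq_zero : ∀ v : M, pn v = 0 ↔ v = 0
  pn_add_le : ∀ v w : M, pn (v + w) ≤ pn v + pn w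
  pn_smul : ∀ (f : L0 μ) (v : M), pn (f • v) = |f| * pn v
  complete : ∀ u : ℕ → M,
    (∀ ε : ℝ, 0 < ε → ∃ N : ℕ, ∀ m ≥ N, ∀ n ≥ N, dL0 μ (pn (u m - u n)) 0 < ε) →
    ∃ v : M, Tendsto (fun n => dL0 μ (pn (u n - v)) 0) atTop (nhds 0)

/-- The pointwise norm of a Banach `L⁰(𝕏)`-module, with the measure explicit. -/
noncomputable def pn (μ : Measure X) [SFinite μ] {M : Type*} [AddCommGroup M]
    [Module (L0 μ) M] [BanachMod μ M] (v : M) : L0 μ :=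
  BanachMod.pn v

/-- The distance on a Banach `L⁰(𝕏)`-module. -/
noncomputable def dM (μ : Measure X) [SFinite μ] {M : Type*} [AddCommGroup M]
    [Module (L0 μ) M] [BanachMod μ M] (v w : M) : ℝ :=
  dL0 μ (pn μ (v - w)) 0

section Defs

variable (μ : Measure X) [SFinite μ]
variable {M N : Type*} [AddCommGroup M] [Module (L0 μ) M] [BanachMod μ M]
  [AddCommGroup N] [Module (L0 μ) N] [BanachMod μ N]

/-- The set of admissible bounds of a map between Banach `L⁰(𝕏)`-modules; the pointwise norm
`|T|` of a homomorphism is the infimum of this set. -/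
def homBddSet (T : M → N) : Set (L0 μ) :=
  {g | 0 ≤ g ∧ ∀ v, pn μ (T v) ≤ g * pn μ v}

/-- A homomorphism of Banach `L⁰(𝕏)`-modules: an `L⁰(𝕏)`-linear map admitting a bound
`g ∈ L⁰(𝕏)⁺` with `|T v| ≤ g |v|` (equivalently, `L⁰(𝕏)`-linear and continuous). -/
def IsHom (T : M →ₗ[L0 μ] N) : Prop :=
  ∃ g, g ∈ homBddSet μ (⇑T)

/-- The set of admissible bounds of an `L⁰(𝕏)`-valued map (for elements of the dual module). -/
def dualBddSet (ω : M → L0 μ) : Set (L0 μ) :=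
  {g | 0 ≤ g ∧ ∀ v, |ω v| ≤ g * pn μ v}

/-- Membership in the dual module `ℳ*`: an `L⁰(𝕏)`-linear map `ω : ℳ → L⁰(𝕏)` admitting a
bound `g ∈ L⁰(𝕏)⁺` with `|ω v| ≤ g |v|`. -/
def IsDual (ω : M →ₗ[L0 μ] L0 μ) : Prop :=
  ∃ g, g ∈ dualBddSet μ (⇑ω)

/-- Membership in the unit disc `𝔻_{ℳ*}` of the dual module: `|ω| ≤ 1`, equivalently
`|ω v| ≤ |v|` for every `v`. -/
def InDualDisc (ω : M →ₗ[L0 μ] L0 μ) : Prop :=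
  ∀ v, |ω v| ≤ pn μ v

/-- The family of pointwise norms `|s - ∑_{i ∈ F ∪ G} v i|` for `G` finite disjoint from `F`,
whose `F`-indexed inf-sup being `0` defines `s = ∑_{i∈I} v i`. -/
def sumUB {I : Type*} (v : I → M) (s : M) (F : Finset I) : Set (L0 μ) :=
  {g | ∃ G : Finset I, Disjoint G F ∧ g = pn μ (s - (∑ i ∈ F, v i + ∑ i ∈ G, v i))}

/-- `HasSumMod μ v s` means that the family `{v_i}` is summable in the Banach `L⁰(𝕏)`-module
with sum `s`, i.e. `⋀_F ⋁_G |s - ∑_{i ∈ F ∪ G} v_i| = 0` (the inner suprema being the values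
of `b`, and the outer infimum being `0`). -/
def HasSumMod {I : Type*} (v : I → M) (s : M) : Prop :=
  ∃ b : Finset I → L0 μ, (∀ F, IsLUB (sumUB μ v s F) (b F)) ∧ IsGLB (Set.range b) 0

/-- A family in a Banach `L⁰(𝕏)`-module is summable if it has a sum. -/
def SummableMod {I : Type*} (v : I → M) : Prop :=
  ∃ s, HasSumMod μ v s

/-- The partial sums `∑_{i ∈ F} |v i|` of the pointwise norms of a family; the element `|v|₁`
of `ℓ₁(I, ℳ)` is the supremum of this set. -/
def l1PartialSums {I : Type*} (v : I → M) : Set (L0 μ) :=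
  {g | ∃ F : Finset I, g = ∑ i ∈ F, pn μ (v i)}

/-- Membership in `ℓ₁(I, ℳ)`: the partial sums of the pointwise norms admit a supremum
(equivalently, an upper bound) in `L⁰(𝕏)`. -/
def Meml1 {I : Type*} (v : I → M) : Prop :=
  ∃ b, IsLUB (l1PartialSums μ v) b

/-- The partial sums `∑_{i ∈ F} |v i|` for an `L⁰(𝕏)`-valued family. -/
def l1PartialSumsF {I : Type*} (v : I → L0 μ) : Set (L0 μ) :=
  {g | ∃ F : Finset I, g = ∑ i ∈ F, |v i|}

/-- Membership in `ℓ₁(I, L⁰(𝕏))`. -/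
def Meml1F {I : Type*} (v : I → L0 μ) : Prop :=
  ∃ b, IsLUB (l1PartialSumsF μ v) b

/-- The set whose infimum defines the projective pointwise norm: all values
`∑_{i=1}^n |v_i||w_i|` over representations `α = ∑_{i=1}^n v_i ⊗ w_i`. -/
def piReps (α : M ⊗[L0 μ] N) : Set (L0 μ) :=
  {g | ∃ (n : ℕ) (v : Fin n → M) (w : Fin n → N),
    α = ∑ i, v i ⊗ₜ[L0 μ] w i ∧ g = ∑ i, pn μ (v i) * pn μ (w i)}

/-- The set whose supremum defines the injective pointwise norm: all values
`|∑_{i=1}^n ω(v_i) η(w_i)|` over representations `α = ∑_{i=1}^n v_i ⊗ w_i` and elements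
`ω ∈ 𝔻_{ℳ*}`, `η ∈ 𝔻_{𝒩*}`. -/
def epsReps (α : M ⊗[L0 μ] N) : Set (L0 μ) :=
  {g | ∃ (n : ℕ) (v : Fin n → M) (w : Fin n → N)
    (ω : M →ₗ[L0 μ] L0 μ) (η : N →ₗ[L0 μ] L0 μ), InDualDisc μ ω ∧ InDualDisc μ η ∧
    α = ∑ i, v i ⊗ₜ[L0 μ] w i ∧ g = |∑ i, ω (v i) * η (w i)|}

/-- `IsPiTensor μ M N P e` states that the Banach `L⁰(𝕏)`-module `P`, together with the
`L⁰(𝕏)`-linear map `e` defined on the algebraic tensor product, realizes the projective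
tensor product `ℳ ⊗̂_π 𝒩`: the pointwise norm of `e α` is the projective pointwise norm
`|α|_π` and the image of `e` is dense. -/
structure IsPiTensor (M N P : Type*) [AddCommGroup M] [Module (L0 μ) M] [BanachMod μ M]
    [AddCommGroup N] [Module (L0 μ) N] [BanachMod μ N]
    [AddCommGroup P] [Module (L0 μ) P] [BanachMod μ P]
    (e : M ⊗[L0 μ] N →ₗ[L0 μ] P) : Prop where
  pn_emb : ∀ α : M ⊗[L0 μ] N, IsGLB (piReps μ α) (pn μ (e α))
  dense : ∀ p : P, ∀ ε : ℝ, 0 < ε → ∃ α : M ⊗[L0 μ] N, dM μ (e α) p < ε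

/-- `IsEpsTensor μ M N P e` states that the Banach `L⁰(𝕏)`-module `P`, together with the
`L⁰(𝕏)`-linear map `e` defined on the algebraic tensor product, realizes the injective
tensor product `ℳ ⊗̂_ε 𝒩`: the pointwise norm of `e α` is the injective pointwise norm
`|α|_ε` and the image of `e` is dense. -/
structure IsEpsTensor (M N P : Type*) [AddCommGroup M] [Module (L0 μ) M] [BanachMod μ M]
    [AddCommGroup N] [Module (L0 μ) N] [BanachMod μ N]
    [AddCommGroup P] [Module (L0 μ) P] [BanachMod μ P]
    (e : M ⊗[L0 μ] N →ₗ[L0 μ] P) : Prop where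
  pn_emb : ∀ α : M ⊗[L0 μ] N, IsLUB (epsReps μ α) (pn μ (e α))
  dense : ∀ p : P, ∀ ε : ℝ, 0 < ε → ∃ α : M ⊗[L0 μ] N, dM μ (e α) p < ε

end Defs

/-! ### The ordered ring `L⁰` -/

section OrderedRing

variable {μ : Measure X}

instance : IsOrderedAddMonoid (L0 μ) where
  add_le_add_left a b hab c := by
    rw [← AEEqFun.coeFn_le] at hab ⊢
    filter_upwards [hab, AEEqFun.coeFn_add a c, AEEqFun.coeFn_add b c] with x hx hac hbc
    simpa only [hac, hbc, Pi.add_apply] using add_le_add_left hx (c x)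

instance : ZeroLEOneClass (L0 μ) where
  zero_le_one := by
    rw [← AEEqFun.coeFn_le]
    filter_upwards [AEEqFun.coeFn_zero (μ := μ) (β := ℝ), AEEqFun.coeFn_one (μ := μ) (β := ℝ)]
      with x h₀ h₁
    simp [h₀, h₁]

instance : IsOrderedRing (L0 μ) :=
  .of_mul_nonneg fun f g hf hg => by
    rw [← AEEqFun.coeFn_le] at hf hg ⊢
    filter_upwards [hf, hg, AEEqFun.coeFn_mul f g, AEEqFun.coeFn_zero (μ := μ) (β := ℝ)]
      with x hfx hgx hfg h₀
    simp only [hfg, h₀, Pi.mul_apply, Pi.zero_apply] at hfx hgx ⊢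
    exact mul_nonneg hfx hgx

namespace L0

protected lemma abs_mul (f g : L0 μ) : |f * g| = |f| * |g| := by
  apply AEEqFun.ext
  filter_upwards [AEEqFun.coeFn_abs (f * g), AEEqFun.coeFn_mul f g, AEEqFun.coeFn_mul |f| |g|,
    AEEqFun.coeFn_abs f, AEEqFun.coeFn_abs g] with x habs hmul hmul' hf hg
  simp only [habs, hmul, hmul', hf, hg, Pi.mul_apply, abs_mul]

/-- The pointwise inverse of `f ∈ L⁰`, with value `0` where `f` vanishes. -/
def pinv (f : L0 μ) : L0 μ := AEEqFun.compMeasurable (fun t : ℝ => t⁻¹) measurable_inv f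

lemma coeFn_pinv (f : L0 μ) : ⇑(pinv f) =ᵐ[μ] fun x => (f x)⁻¹ :=
  AEEqFun.coeFn_compMeasurable _ _ _

lemma pinv_nonneg {f : L0 μ} (hf : 0 ≤ f) : 0 ≤ pinv f := by
  rw [← AEEqFun.coeFn_le] at hf ⊢
  filter_upwards [hf, coeFn_pinv f, AEEqFun.coeFn_zero (μ := μ) (β := ℝ)] with x hfx hinv h₀
  simp only [hinv, h₀, Pi.zero_apply] at hfx ⊢
  exact inv_nonneg.2 hfx

lemma mul_pinv_le_one (f : L0 μ) : f * pinv f ≤ 1 := by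
  rw [← AEEqFun.coeFn_le]
  filter_upwards [AEEqFun.coeFn_mul f (pinv f), AEEqFun.coeFn_one (μ := μ) (β := ℝ),
    coeFn_pinv f] with x hmul h₁ hinv
  simp only [hmul, h₁, hinv, Pi.mul_apply, Pi.one_apply]
  exact mul_inv_le_one

lemma mul_pinv_mul_self (f : L0 μ) : f * pinv f * f = f := by
  apply AEEqFun.ext
  filter_upwards [AEEqFun.coeFn_mul (f * pinv f) f, AEEqFun.coeFn_mul f (pinv f),
    coeFn_pinv f] with x hmul hmul' hinv
  simp only [hmul, hmul', hinv, Pi.mul_apply]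
  exact mul_inv_mul_cancel (f x)

lemma pinv_mul_mul_pinv (f : L0 μ) : pinv f * f * pinv f = pinv f := by
  apply AEEqFun.ext
  filter_upwards [AEEqFun.coeFn_mul (pinv f * f) (pinv f), AEEqFun.coeFn_mul (pinv f) f,
    coeFn_pinv f] with x hmul hmul' hinv
  simp only [hmul, hmul', hinv, Pi.mul_apply]
  simpa using mul_inv_mul_cancel (f x)⁻¹

lemma pinv_sup_zero_mul (f : L0 μ) : pinv (f ⊔ 0) * f = pinv (f ⊔ 0) * (f ⊔ 0) := by
  apply AEEqFun.ext
  filter_upwards [AEEqFun.coeFn_mul (pinv (f ⊔ 0)) f, AEEqFun.coeFn_mul (pinv (f ⊔ 0)) (f ⊔ 0),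
    coeFn_pinv (f ⊔ 0), AEEqFun.coeFn_sup f 0, AEEqFun.coeFn_zero (μ := μ) (β := ℝ)]
    with x hmul hmul' hinv hsup h₀
  simp only [hmul, hmul', hinv, hsup, h₀, Pi.mul_apply, Pi.zero_apply]
  rcases le_total (f x) 0 with hx | hx
  · simp [sup_eq_right.2 hx]
  · rw [sup_eq_left.2 hx]

lemma le_of_pinv_mul_le {a b h : L0 μ} (hpos : pinv (h ⊔ 0) * a ≤ pinv (h ⊔ 0) * b)
    (hneg : pinv (-h ⊔ 0) * a ≤ pinv (-h ⊔ 0) * b)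
    (hzero : (1 - h * pinv h) * a ≤ (1 - h * pinv h) * b) : a ≤ b := by
  rw [← AEEqFun.coeFn_le] at hpos hneg hzero ⊢
  filter_upwards [hpos, AEEqFun.coeFn_mul (pinv (h ⊔ 0)) a, AEEqFun.coeFn_mul (pinv (h ⊔ 0)) b,
    coeFn_pinv (h ⊔ 0), AEEqFun.coeFn_sup h 0,
    hneg, AEEqFun.coeFn_mul (pinv (-h ⊔ 0)) a, AEEqFun.coeFn_mul (pinv (-h ⊔ 0)) b,
    coeFn_pinv (-h ⊔ 0), AEEqFun.coeFn_sup (-h) 0, AEEqFun.coeFn_neg h,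
    hzero, AEEqFun.coeFn_mul (1 - h * pinv h) a, AEEqFun.coeFn_mul (1 - h * pinv h) b,
    AEEqFun.coeFn_sub 1 (h * pinv h), AEEqFun.coeFn_mul h (pinv h), coeFn_pinv h,
    AEEqFun.coeFn_zero (μ := μ) (β := ℝ), AEEqFun.coeFn_one (μ := μ) (β := ℝ)]
    with x hp hpa hpb hpinv hpsup hn hna hnb hninv hnsup hneg hz hza hzb hsub hmul hinv h₀ h₁
  simp only [hpa, hpb, hpinv, hpsup, hna, hnb, hninv, hnsup, hneg, hza, hzb, hsub, hmul, hinv,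
    h₀, h₁, Pi.mul_apply, Pi.sub_apply, Pi.neg_apply, Pi.zero_apply, Pi.one_apply] at hp hn hz
  rcases lt_trichotomy (h x) 0 with hx | hx | hx
  · rw [sup_eq_left.2 (neg_nonneg.2 hx.le)] at hn
    exact le_of_mul_le_mul_left hn (inv_pos.2 (neg_pos.2 hx))
  · simpa [hx] using hz
  · rw [sup_eq_left.2 hx.le] at hp
    exact le_of_mul_le_mul_left hp (inv_pos.2 hx)

lemma le_isGLB_mul {S : Set (L0 μ)} {c d h : L0 μ} (hS : ∀ g ∈ S, 0 ≤ g) (hne : S.Nonempty)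
    (hd : IsGLB S d) (hc : 0 ≤ c) (hh : ∀ g ∈ S, h ≤ g * c) : h ≤ d * c := by
  have hdiv : h * pinv c ≤ d := hd.2 fun g hg =>
    calc h * pinv c ≤ g * c * pinv c := mul_le_mul_of_nonneg_right (hh g hg) (pinv_nonneg hc)
      _ = g * (c * pinv c) := mul_assoc _ _ _
      _ ≤ g * 1 := mul_le_mul_of_nonneg_left (mul_pinv_le_one c) (hS g hg)
      _ = g := mul_one g
  have hzero : h * (1 - c * pinv c) ≤ 0 := by
    obtain ⟨g, hg⟩ := hne
    calc h * (1 - c * pinv c) ≤ g * c * (1 - c * pinv c) :=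
          mul_le_mul_of_nonneg_right (hh g hg) (sub_nonneg.2 (mul_pinv_le_one c))
      _ = g * (c - c * pinv c * c) := by ring
      _ = 0 := by rw [mul_pinv_mul_self, sub_self, mul_zero]
  calc h = h * pinv c * c + h * (1 - c * pinv c) := by ring
    _ ≤ d * c + 0 := add_le_add (mul_le_mul_of_nonneg_right hdiv hc) hzero
    _ = d * c := add_zero _

end L0

end OrderedRing

/-! ### Dedekind completeness -/

section DedekindComplete

variable {μ : Measure X}

namespace L0

/-- The measure with density `exp f` with respect to `μ`. Since `exp f` takes values in
`(0, ∞)`, this embeds the order of `L⁰` into the complete lattice of measures. -/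
def expMeasure (f : L0 μ) : Measure X :=
  μ.withDensity fun x => ENNReal.ofReal (Real.exp (f x))

lemma expMeasure_le_withDensity_iff [SigmaFinite μ] {f : L0 μ} {ρ : X → ENNReal} :
    expMeasure f ≤ μ.withDensity ρ ↔
      (fun x => ENNReal.ofReal (Real.exp (f x))) ≤ᵐ[μ] ρ := by
  refine ⟨fun h => ?_, withDensity_mono⟩
  refine ae_le_of_forall_setLIntegral_le_of_sigmaFinite₀
    (Real.measurable_exp.comp_aemeasurable f.aemeasurable).ennreal_ofReal fun s hs _ => ?_
  rw [← withDensity_apply _ hs, ← withDensity_apply _ hs]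
  exact h s

lemma expMeasure_le_expMeasure_iff [SigmaFinite μ] {f g : L0 μ} :
    expMeasure f ≤ expMeasure g ↔ f ≤ g := by
  rw [← AEEqFun.coeFn_le]
  refine expMeasure_le_withDensity_iff.trans (eventually_congr (.of_forall fun x => ?_))
  rw [ENNReal.ofReal_le_ofReal_iff (Real.exp_pos _).le, Real.exp_le_exp]

lemma exists_expMeasure_eq [SigmaFinite μ] {f u : L0 μ} {ν : Measure X}
    (hf : expMeasure f ≤ ν) (hu : ν ≤ expMeasure u) : ∃ b : L0 μ, expMeasure b = ν := by
  have hac : ν ≪ μ :=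
    (Measure.absolutelyContinuous_of_le hu).trans (withDensity_absolutelyContinuous _ _)
  have : SigmaFinite (expMeasure u) := SigmaFinite.withDensity_ofReal _
  have : SigmaFinite ν := Measure.sigmaFinite_of_le _ hu
  have hν : μ.withDensity (ν.rnDeriv μ) = ν := Measure.withDensity_rnDeriv_eq _ _ hac
  have hpos : (fun x => ENNReal.ofReal (Real.exp (f x))) ≤ᵐ[μ] ν.rnDeriv μ :=
    expMeasure_le_withDensity_iff.1 (hf.trans_eq hν.symm)
  have hmeas : AEStronglyMeasurable (fun x => Real.log (ν.rnDeriv μ x).toReal) μ :=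
    (Measure.measurable_rnDeriv ν μ).ennreal_toReal.log.aestronglyMeasurable
  refine ⟨AEEqFun.mk _ hmeas, (withDensity_congr_ae ?_).trans hν⟩
  filter_upwards [AEEqFun.coeFn_mk _ hmeas, hpos, ν.rnDeriv_lt_top μ] with x hx hfx htop
  have hx₀ : 0 < (ν.rnDeriv μ x).toReal :=
    ENNReal.toReal_pos ((ENNReal.ofReal_pos.2 (Real.exp_pos _)).trans_le hfx).ne' htop.ne
  rw [hx, Real.exp_log hx₀, ENNReal.ofReal_toReal htop.ne]

lemma exists_isLUB [SigmaFinite μ] {S : Set (L0 μ)} (hne : S.Nonempty) (hb : BddAbove S) :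
    ∃ b, IsLUB S b := by
  obtain ⟨f, hf⟩ := hne
  obtain ⟨u, hu⟩ := hb
  obtain ⟨b, hb⟩ : ∃ b : L0 μ, expMeasure b = sSup (expMeasure '' S) :=
    exists_expMeasure_eq (le_sSup (mem_image_of_mem _ hf))
      (sSup_le (forall_mem_image.2 fun g hg => expMeasure_le_expMeasure_iff.2 (hu hg)))
  exact ⟨b, .of_image expMeasure_le_expMeasure_iff (hb ▸ isLUB_sSup _)⟩

lemma exists_isGLB [SigmaFinite μ] {S : Set (L0 μ)} (hne : S.Nonempty) (hb : BddBelow S) :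
    ∃ b, IsGLB S b := by
  obtain ⟨b, hb⟩ := exists_isLUB (S := lowerBounds S) hb (hne.mono fun x hx _ hy => hy hx)
  exact ⟨b, isLUB_lowerBounds.1 hb⟩

end L0

end DedekindComplete

/-! ### The topology of `L⁰` -/

section Topology

variable {μ : Measure X} [SFinite μ]

lemma dL0_zero_right (f : L0 μ) : dL0 μ f 0 = ∫ x, min |f x| 1 ∂μ.toFinite := by
  refine integral_congr_ae ((toFinite_absolutelyContinuous μ).ae_le ?_)
  filter_upwards [AEEqFun.coeFn_zero (μ := μ) (β := ℝ)] with x h₀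
  simp [h₀]

namespace L0

lemma integrable_min_abs_one (f : L0 μ) : Integrable (fun x => min |f x| 1) μ.toFinite := by
  refine .mono' (integrable_const (1 : ℝ)) ?_ (.of_forall fun x => ?_)
  · exact (f.stronglyMeasurable.measurable.abs.min measurable_const).aestronglyMeasurable
  · rw [Real.norm_of_nonneg (by positivity)]
    exact min_le_right _ _

lemma min_abs_sub_one_ae_eq (f g : L0 μ) :
    (fun x => min |(f - g) x| 1) =ᵐ[μ.toFinite] fun x => min |f x - g x| 1 := by
  filter_upwards [(toFinite_absolutelyContinuous μ).ae_le (AEEqFun.coeFn_sub f g)] with x hx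
  rw [hx, Pi.sub_apply]

lemma dL0_zero_mono {f g : L0 μ} (h : |f| ≤ |g|) : dL0 μ f 0 ≤ dL0 μ g 0 := by
  rw [dL0_zero_right, dL0_zero_right]
  refine integral_mono_ae f.integrable_min_abs_one g.integrable_min_abs_one
    ((toFinite_absolutelyContinuous μ).ae_le ?_)
  filter_upwards [AEEqFun.coeFn_le.2 h, AEEqFun.coeFn_abs f, AEEqFun.coeFn_abs g] with x hx hf hg
  rw [hf, hg] at hx
  exact min_le_min_right _ hx

lemma dL0_add_zero_le (f g : L0 μ) : dL0 μ (f + g) 0 ≤ dL0 μ f 0 + dL0 μ g 0 := by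
  simp only [dL0_zero_right]
  rw [← integral_add f.integrable_min_abs_one g.integrable_min_abs_one]
  refine integral_mono_ae (f + g).integrable_min_abs_one
    (f.integrable_min_abs_one.add g.integrable_min_abs_one)
    ((toFinite_absolutelyContinuous μ).ae_le ?_)
  filter_upwards [AEEqFun.coeFn_add f g] with x hx
  rw [hx, Pi.add_apply]
  grind

lemma eq_zero_of_dL0_zero {f : L0 μ} (h : dL0 μ f 0 = 0) : f = 0 := by
  rw [dL0_zero_right, integral_eq_zero_iff_of_nonneg (fun x => by positivity)
    f.integrable_min_abs_one] at h
  apply AEEqFun.ext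
  filter_upwards [(absolutelyContinuous_toFinite μ).ae_le h,
    AEEqFun.coeFn_zero (μ := μ) (β := ℝ)] with x hx h₀
  rw [h₀]
  simp only [Pi.zero_apply] at hx ⊢
  grind

variable (μ) in
/-- `L⁰(𝕏)` as a normed group with `‖f‖ = d(f, 0)`: the topology of convergence in measure. The
norm is not homogeneous. -/
abbrev normedAddCommGroup : NormedAddCommGroup (L0 μ) :=
  AddGroupNorm.toNormedAddCommGroup
    { toFun := fun f => dL0 μ f 0
      map_zero' := by simp [dL0]
      add_le' := dL0_add_zero_le
      neg' := fun f => le_antisymm (dL0_zero_mono (abs_neg f).le) (dL0_zero_mono (abs_neg f).ge)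
      eq_zero_of_map_eq_zero' := fun _ => eq_zero_of_dL0_zero }

attribute [local instance] normedAddCommGroup

lemma norm_le_norm_of_abs_le_abs {f g : L0 μ} (h : |f| ≤ |g|) : ‖f‖ ≤ ‖g‖ := dL0_zero_mono h

lemma tendsto_iff_tendsto_integral {f : ℕ → L0 μ} {g : L0 μ} :
    Tendsto f atTop (nhds g) ↔
      Tendsto (fun n => ∫ x, min |f n x - g x| 1 ∂μ.toFinite) atTop (nhds 0) := by
  rw [tendsto_iff_norm_sub_tendsto_zero]
  exact tendsto_congr fun n =>
    (dL0_zero_right _).trans (integral_congr_ae (min_abs_sub_one_ae_eq (f n) g))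

lemma tendsto_of_ae_tendsto {f : ℕ → L0 μ} {g : L0 μ}
    (h : ∀ᵐ x ∂μ, Tendsto (fun n => f n x) atTop (nhds (g x))) : Tendsto f atTop (nhds g) := by
  rw [tendsto_iff_tendsto_integral]
  have hlim : ∀ᵐ x ∂μ.toFinite, Tendsto (fun n => min |f n x - g x| 1) atTop (nhds 0) := by
    filter_upwards [(toFinite_absolutelyContinuous μ).ae_le h] with x hx
    simpa using ((tendsto_sub_nhds_zero_iff.2 hx).abs.min (tendsto_const_nhds (x := (1 : ℝ))))
  simpa using tendsto_integral_of_dominated_convergence (fun _ => (1 : ℝ))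
    (fun n => (((f n).stronglyMeasurable.measurable.sub g.stronglyMeasurable.measurable).abs.min
      measurable_const).aestronglyMeasurable) (integrable_const 1)
    (fun n => .of_forall fun x => by
      rw [Real.norm_of_nonneg (by positivity)]
      exact min_le_right _ _) hlim

lemma tendstoInMeasure_of_tendsto {f : ℕ → L0 μ} {g : L0 μ} (h : Tendsto f atTop (nhds g)) :
    TendstoInMeasure μ.toFinite (fun n => f n) atTop g := by
  rw [tendsto_iff_tendsto_integral] at h
  refine tendstoInMeasure_iff_measureReal_norm.2 fun ε hε => ?_
  have hε₁ : 0 < min ε 1 := lt_min hε one_pos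
  refine squeeze_zero (fun _ => measureReal_nonneg) (fun n => ?_)
    (by simpa using h.const_mul (min ε 1)⁻¹)
  have hint : Integrable (fun x => min |f n x - g x| 1) μ.toFinite :=
    (f n - g).integrable_min_abs_one.congr (min_abs_sub_one_ae_eq (f n) g)
  rw [le_inv_mul_iff₀ hε₁]
  calc min ε 1 * μ.toFinite.real {x | ε ≤ ‖f n x - g x‖}
      ≤ min ε 1 * μ.toFinite.real {x | min ε 1 ≤ min |f n x - g x| 1} :=
        mul_le_mul_of_nonneg_left
          (measureReal_mono (ofPred_subset_ofPred.2 fun _ hx => min_le_min_right 1 hx)) hε₁.le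
    _ ≤ ∫ x, min |f n x - g x| 1 ∂μ.toFinite :=
        mul_meas_ge_le_integral_of_nonneg (.of_forall fun _ => by positivity) hint _

lemma exists_subseq_ae_tendsto {f : ℕ → L0 μ} {g : L0 μ} (h : Tendsto f atTop (nhds g)) :
    ∃ ns : ℕ → ℕ, StrictMono ns ∧
      ∀ᵐ x ∂μ, Tendsto (fun k => f (ns k) x) atTop (nhds (g x)) := by
  obtain ⟨ns, hns, hlim⟩ := (tendstoInMeasure_of_tendsto h).exists_seq_tendsto_ae
  exact ⟨ns, hns, (absolutelyContinuous_toFinite μ).ae_le hlim⟩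

lemma isClosed_nonneg : IsClosed {f : L0 μ | 0 ≤ f} := by
  refine IsSeqClosed.isClosed fun f g hf hfg => ?_
  obtain ⟨ns, -, hlim⟩ := exists_subseq_ae_tendsto hfg
  have hnonneg : ∀ᵐ x ∂μ, ∀ n, (0 : L0 μ) x ≤ f n x :=
    ae_all_iff.2 fun n => AEEqFun.coeFn_le.2 (hf n)
  refine AEEqFun.coeFn_le.1 ?_
  filter_upwards [hnonneg, hlim] with x hx hlimx
  exact ge_of_tendsto' hlimx fun k => hx (ns k)

instance : OrderClosedTopology (L0 μ) where
  isClosed_le' := by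
    simpa only [preimage_ofPred_eq, sub_nonneg] using
      isClosed_nonneg.preimage (f := fun p : L0 μ × L0 μ => p.2 - p.1) (by fun_prop)

instance : ContinuousConstSMul (L0 μ) (L0 μ) where
  continuous_const_smul g := by
    refine continuous_iff_seqContinuous.2 fun f f₀ hf => ?_
    refine tendsto_of_subseq_tendsto fun ns hns => ?_
    obtain ⟨ms, -, hlim⟩ := exists_subseq_ae_tendsto (hf.comp hns)
    refine ⟨ms, tendsto_of_ae_tendsto ?_⟩
    filter_upwards [hlim, AEEqFun.coeFn_mul g f₀,
      ae_all_iff.2 fun k => AEEqFun.coeFn_mul g (f (ns (ms k)))] with x hx hg hgk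
    simpa only [Function.comp_apply, smul_eq_mul, hg, hgk, Pi.mul_apply] using hx.const_mul (g x)

end L0

end Topology

/-! ### The topology of a Banach `L⁰`-module -/

section PointwiseNorm

variable {μ : Measure X} [SFinite μ]
variable {M : Type*} [AddCommGroup M] [Module (L0 μ) M] [BanachMod μ M]

lemma pn_nonneg (v : M) : 0 ≤ pn μ v := BanachMod.pn_nonneg v

lemma pn_eq_zero {v : M} : pn μ v = 0 ↔ v = 0 := BanachMod.pn_eq_zero v

lemma pn_add_le (v w : M) : pn μ (v + w) ≤ pn μ v + pn μ w := BanachMod.pn_add_le v w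

lemma pn_smul (f : L0 μ) (v : M) : pn μ (f • v) = |f| * pn μ v := BanachMod.pn_smul f v

@[simp]
lemma pn_zero : pn μ (0 : M) = 0 := pn_eq_zero.2 rfl

lemma pn_smul_of_nonneg {f : L0 μ} (hf : 0 ≤ f) (v : M) : pn μ (f • v) = f * pn μ v := by
  rw [pn_smul, abs_of_nonneg hf]

lemma pn_neg (v : M) : pn μ (-v) = pn μ v := by
  rw [← neg_one_smul (L0 μ), pn_smul, abs_neg, abs_of_nonneg zero_le_one, one_mul]

lemma abs_pn_sub_pn_le (v w : M) : |pn μ v - pn μ w| ≤ pn μ (v - w) := by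
  refine abs_le'.2 ⟨sub_le_iff_le_add.2 ?_, ?_⟩
  · simpa only [sub_add_cancel] using pn_add_le (μ := μ) (v - w) w
  · rw [neg_sub, sub_le_iff_le_add, ← pn_neg (v - w), neg_sub]
    simpa only [sub_add_cancel] using pn_add_le (μ := μ) (w - v) v

variable (μ M) in
/-- A Banach `L⁰`-module as a normed group whose distance is `dM`. -/
abbrev pnNormedAddCommGroup : NormedAddCommGroup M :=
  letI := L0.normedAddCommGroup μ
  AddGroupNorm.toNormedAddCommGroup
    { toFun := fun v => ‖pn μ v‖
      map_zero' := by simp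
      add_le' := fun v w => (L0.norm_le_norm_of_abs_le_abs (abs_le_abs_of_nonneg (pn_nonneg _)
        (pn_add_le v w))).trans (norm_add_le _ _)
      neg' := fun v => by rw [pn_neg]
      eq_zero_of_map_eq_zero' := fun _ h => pn_eq_zero.1 (norm_eq_zero.1 h) }

attribute [local instance] L0.normedAddCommGroup

variable (μ M) in
lemma continuous_pn :
    letI := pnNormedAddCommGroup μ M
    Continuous (pn μ : M → L0 μ) := by
  let := pnNormedAddCommGroup μ M
  refine (LipschitzWith.of_dist_le_mul (K := 1) fun v w => ?_).continuous
  rw [NNReal.coe_one, one_mul, dist_eq_norm, dist_eq_norm]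
  exact L0.norm_le_norm_of_abs_le_abs ((abs_pn_sub_pn_le v w).trans (le_abs_self _))

variable (μ M) in
lemma continuous_mul_pn (g : L0 μ) :
    letI := pnNormedAddCommGroup μ M
    Continuous fun v : M => g * pn μ v := by
  let := pnNormedAddCommGroup μ M
  exact (continuous_pn μ M).const_smul g

variable (μ M) in
lemma tendsto_mul_pn_zero (g : L0 μ) :
    letI := pnNormedAddCommGroup μ M
    Tendsto (fun v : M => g * pn μ v) (nhds 0) (nhds 0) := by
  let := pnNormedAddCommGroup μ M
  simpa using (continuous_mul_pn μ M g).tendsto 0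

variable (μ M) in
lemma continuousConstSMul_pnNormed :
    letI := pnNormedAddCommGroup μ M
    ContinuousConstSMul (L0 μ) M := by
  let := pnNormedAddCommGroup μ M
  refine ⟨fun f => continuous_of_continuousAt_zero (DistribSMul.toAddMonoidHom M f) ?_⟩
  rw [ContinuousAt, map_zero]
  refine squeeze_zero_norm (fun v => L0.norm_le_norm_of_abs_le_abs ?_)
    (tendsto_zero_iff_norm_tendsto_zero.1 (tendsto_mul_pn_zero μ M f))
  rw [DistribSMul.toAddMonoidHom_apply, pn_smul, L0.abs_mul, L0.abs_mul, abs_abs]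

variable (μ M) in
lemma completeSpace_pnNormed :
    letI := pnNormedAddCommGroup μ M
    CompleteSpace M := by
  let := pnNormedAddCommGroup μ M
  refine Metric.complete_of_cauchySeq_tendsto fun u hu => ?_
  obtain ⟨v, hv⟩ := BanachMod.complete (μ := μ) u fun ε hε => by
    obtain ⟨K, hK⟩ := Metric.cauchySeq_iff.1 hu ε hε
    exact ⟨K, fun m hm n hn => (dist_eq_norm (u m) (u n)).symm.trans_lt (hK m hm n hn)⟩
  exact ⟨v, tendsto_iff_norm_sub_tendsto_zero.2 hv⟩

end PointwiseNorm

section Density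

variable {μ : Measure X} [SFinite μ]
variable {A E N : Type*} [AddCommGroup E] [Module (L0 μ) E] [BanachMod μ E]
  [AddCommGroup N] [Module (L0 μ) N] [BanachMod μ N]

attribute [local instance] L0.normedAddCommGroup

lemma add_mem_homBddSet {S T : E → N} {g h : L0 μ} (hg : g ∈ homBddSet μ S)
    (hh : h ∈ homBddSet μ T) : g + h ∈ homBddSet μ (S + T) := by
  refine ⟨add_nonneg hg.1 hh.1, fun v => (pn_add_le _ _).trans ?_⟩
  exact (add_le_add (hg.2 v) (hh.2 v)).trans_eq (add_mul _ _ _).symm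

lemma smul_mem_homBddSet (f : L0 μ) {S : E → N} {g : L0 μ} (hg : g ∈ homBddSet μ S) :
    |f| * g ∈ homBddSet μ (f • S) := by
  refine ⟨mul_nonneg (abs_nonneg f) hg.1, fun v => (pn_smul _ _).trans_le ?_⟩
  exact (mul_le_mul_of_nonneg_left (hg.2 v) (abs_nonneg f)).trans_eq (mul_assoc _ _ _).symm

lemma denseRange_of_forall_exists_dM_lt {e : A → E}
    (he : ∀ p : E, ∀ ε : ℝ, 0 < ε → ∃ a : A, dM μ (e a) p < ε) :
    letI := pnNormedAddCommGroup μ E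
    DenseRange e := by
  let := pnNormedAddCommGroup μ E
  refine Metric.denseRange_iff.2 fun p ε hε => (he p ε hε).imp fun a ha => ?_
  rwa [dist_comm, dist_eq_norm]

lemma continuous_of_pn_le [AddCommGroup A] [TopologicalSpace A] [IsTopologicalAddGroup A]
    {S : A →+ N} {φ : A → L0 μ} (hφ : Tendsto φ (nhds 0) (nhds 0)) (hS : ∀ a, pn μ (S a) ≤ φ a) :
    letI := pnNormedAddCommGroup μ N
    Continuous S := by
  let := pnNormedAddCommGroup μ N
  refine continuous_of_continuousAt_zero S ?_
  rw [ContinuousAt, map_zero]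
  refine squeeze_zero_norm (fun a => ?_) (tendsto_zero_iff_norm_tendsto_zero.1 hφ)
  exact L0.norm_le_norm_of_abs_le_abs (abs_le_abs_of_nonneg (pn_nonneg _) (hS a))

lemma continuous_of_mem_homBddSet {S : E →+ N} {g : L0 μ} (hg : g ∈ homBddSet μ S) :
    letI := pnNormedAddCommGroup μ E
    letI := pnNormedAddCommGroup μ N
    Continuous S := by
  let := pnNormedAddCommGroup μ E
  exact continuous_of_pn_le (tendsto_mul_pn_zero μ E g) hg.2

lemma eq_of_eqOn_dense {e : A → E}
    (he : ∀ p : E, ∀ ε : ℝ, 0 < ε → ∃ a : A, dM μ (e a) p < ε) {S T : E →+ N} {g h : L0 μ}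
    (hS : g ∈ homBddSet μ S) (hT : h ∈ homBddSet μ T) (heq : ∀ a, S (e a) = T (e a)) : S = T := by
  let := pnNormedAddCommGroup μ E
  let := pnNormedAddCommGroup μ N
  exact DFunLike.coe_injective <| (denseRange_of_forall_exists_dM_lt he).equalizer
    (continuous_of_mem_homBddSet hS) (continuous_of_mem_homBddSet hT) (funext heq)

lemma exists_extension [AddCommGroup A] [Module (L0 μ) A] {e : A →ₗ[L0 μ] E}
    (he : ∀ p : E, ∀ ε : ℝ, 0 < ε → ∃ a : A, dM μ (e a) p < ε) (T : A →ₗ[L0 μ] N) {g : L0 μ}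
    (hg : 0 ≤ g) (hT : ∀ a, pn μ (T a) ≤ g * pn μ (e a)) :
    ∃ S : E →ₗ[L0 μ] N, (∀ a, S (e a) = T a) ∧ g ∈ homBddSet μ S := by
  let := pnNormedAddCommGroup μ E
  let := pnNormedAddCommGroup μ N
  let := SeminormedAddCommGroup.induced A E e
  have := continuousConstSMul_pnNormed μ E
  have := continuousConstSMul_pnNormed μ N
  have := completeSpace_pnNormed μ N
  have hdense := denseRange_of_forall_exists_dM_lt he
  have hind : IsUniformInducing e := ⟨rfl⟩
  have he₀ : Tendsto e (nhds 0) (nhds 0) := by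
    simpa using hind.uniformContinuous.continuous.tendsto 0
  have hTcont : Continuous T := continuous_of_pn_le (S := T.toAddMonoidHom)
    ((tendsto_mul_pn_zero μ E g).comp he₀) hT
  let S : E →L[L0 μ] N :=
    ContinuousLinearMap.extend ⟨T, hTcont⟩ ⟨e, hind.uniformContinuous.continuous⟩
  have hS : ∀ a, S (e a) = T a := ContinuousLinearMap.extend_eq _ hdense hind
  refine ⟨S, hS, hg, fun p => hdense.induction_on p
    (isClosed_le ((continuous_pn μ N).comp S.continuous) (continuous_mul_pn μ E g)) fun a => ?_⟩
  exact (congrArg (pn μ) (hS a)).trans_le (hT a)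

lemma pn_le_of_forall_dense {e : A → E}
    (he : ∀ p : E, ∀ ε : ℝ, 0 < ε → ∃ a : A, dM μ (e a) p < ε) {g : L0 μ} {p : E}
    (hg : ∀ a, pn μ (e a) ≤ g + pn μ (e a - p)) : pn μ p ≤ g := by
  let := pnNormedAddCommGroup μ E
  have hcont := continuous_pn μ E
  have := (denseRange_of_forall_exists_dM_lt he).induction_on
    (p := fun q => pn μ q ≤ g + pn μ (q - p)) p (isClosed_le hcont
      (continuous_const.add (hcont.comp (continuous_sub_right p)))) hg
  simpa using this

end Density

/-! ### The Hahn–Banach theorem -/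

section HahnBanach

variable {μ : Measure X} [SFinite μ]
variable {N : Type*} [AddCommGroup N] [Module (L0 μ) N] [BanachMod μ N]
variable {f : N →ₗ.[L0 μ] L0 μ} {v : N} {c : L0 μ}

/-- A partially defined functional on a Banach `L⁰`-module dominated by the pointwise norm. The
one-sided bound is the hypothesis propagated by the Hahn–Banach extension; since domains are
submodules, it is equivalent to `|f x| ≤ |x|`. -/
def IsPnDominated (f : N →ₗ.[L0 μ] L0 μ) : Prop :=
  ∀ x : f.domain, f x ≤ pn μ (x : N)

lemma pinv_mul_apply_add_le (hc : ∀ x : f.domain, f x + c ≤ pn μ ((x : N) + v)) (h : L0 μ)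
    (x : f.domain) :
    L0.pinv (h ⊔ 0) * (f x + h * c) ≤ L0.pinv (h ⊔ 0) * pn μ ((x : N) + h • v) := by
  have hpinv : 0 ≤ L0.pinv (h ⊔ 0) := L0.pinv_nonneg le_sup_right
  have hmul : L0.pinv (h ⊔ 0) * h = L0.pinv (h ⊔ 0) * (h ⊔ 0) := L0.pinv_sup_zero_mul h
  have hidem : L0.pinv (h ⊔ 0) * h * L0.pinv (h ⊔ 0) = L0.pinv (h ⊔ 0) := by
    rw [hmul, L0.pinv_mul_mul_pinv]
  have hnonneg : 0 ≤ L0.pinv (h ⊔ 0) * h := by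
    rw [hmul]
    exact mul_nonneg hpinv le_sup_right
  generalize L0.pinv (h ⊔ 0) = t at *
  calc t * (f x + h * c) = t * h * (f (t • x) + c) := by
        rw [LinearPMap.map_smul, smul_eq_mul, mul_add, mul_add, ← mul_assoc (t * h), hidem,
          mul_assoc]
    _ ≤ t * h * pn μ (((t • x : f.domain) : N) + v) := mul_le_mul_of_nonneg_left (hc _) hnonneg
    _ = t * pn μ ((x : N) + h • v) := by
        rw [← pn_smul_of_nonneg hnonneg, ← pn_smul_of_nonneg hpinv, Submodule.coe_smul, smul_add,
          smul_add, smul_smul, smul_smul, hidem]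

/-- The inequality for an arbitrary coefficient `h` is checked separately on `{h > 0}`, `{h < 0}`
and `{h = 0}`. -/
lemma IsPnDominated.apply_add_mul_le (hf : IsPnDominated f)
    (hc : ∀ x : f.domain, f x + c ≤ pn μ ((x : N) + v))
    (hc' : ∀ x : f.domain, f x - c ≤ pn μ ((x : N) - v)) (x : f.domain) (h : L0 μ) :
    f x + h * c ≤ pn μ ((x : N) + h • v) := by
  refine L0.le_of_pinv_mul_le (h := h) (pinv_mul_apply_add_le hc h x) ?_ ?_
  · simp only [sub_eq_add_neg] at hc'
    simpa only [neg_mul_neg, neg_smul_neg] using pinv_mul_apply_add_le hc' (-h) x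
  · have hpinv : 0 ≤ 1 - h * L0.pinv h := sub_nonneg.2 (L0.mul_pinv_le_one h)
    have hzero : (1 - h * L0.pinv h) * h = 0 := by
      rw [sub_mul, one_mul, L0.mul_pinv_mul_self, sub_self]
    generalize 1 - h * L0.pinv h = t at *
    calc t * (f x + h * c) = f (t • x) := by
          rw [LinearPMap.map_smul, smul_eq_mul, mul_add, ← mul_assoc, hzero, zero_mul, add_zero]
      _ ≤ pn μ ((t • x : f.domain) : N) := hf _
      _ = t * pn μ ((x : N) + h • v) := by
          rw [← pn_smul_of_nonneg hpinv, Submodule.coe_smul, smul_add, smul_smul, hzero,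
            zero_smul, add_zero]

lemma IsPnDominated.apply_add_apply_le (hf : IsPnDominated f) (v : N) (x y : f.domain) :
    f x + f y ≤ pn μ ((x : N) + v) + pn μ ((y : N) - v) :=
  calc f x + f y = f (x + y) := (LinearPMap.map_add f x y).symm
    _ ≤ pn μ (((x : N) + v) + ((y : N) - v)) := (hf _).trans_eq <| by
        rw [Submodule.coe_add, add_add_sub_cancel]
    _ ≤ pn μ ((x : N) + v) + pn μ ((y : N) - v) := pn_add_le _ _

lemma IsPnDominated.exists_add_mul_le [SigmaFinite μ] (hf : IsPnDominated f) (v : N) :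
    ∃ c : L0 μ, ∀ (x : f.domain) (h : L0 μ), f x + h * c ≤ pn μ ((x : N) + h • v) := by
  have hlower (y : f.domain) : f y - pn μ ((y : N) - v) ∈
      lowerBounds (range fun x : f.domain => pn μ ((x : N) + v) - f x) := by
    rintro _ ⟨x, rfl⟩
    rw [le_sub_iff_add_le, sub_add_eq_add_sub, sub_le_iff_le_add, add_comm]
    exact hf.apply_add_apply_le v x y
  obtain ⟨c, hc⟩ := L0.exists_isGLB (range_nonempty _) ⟨_, hlower 0⟩
  refine ⟨c, hf.apply_add_mul_le (fun x => ?_) fun y => sub_le_comm.1 (hc.2 (hlower y))⟩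
  rw [add_comm, ← le_sub_iff_add_le]
  exact hc.1 ⟨x, rfl⟩

lemma apply_add_mul_eq_zero
    (hc : ∀ (x : f.domain) (h : L0 μ), f x + h * c ≤ pn μ ((x : N) + h • v)) {x : f.domain}
    {h : L0 μ} (hx : (x : N) + h • v = 0) : f x + h * c = 0 := by
  refine le_antisymm (by simpa only [hx, pn_zero] using hc x h) (neg_nonpos.1 ?_)
  have := hc (-x) (-h)
  rwa [LinearPMap.map_neg, Submodule.coe_neg, neg_smul, ← neg_add, hx, neg_zero, pn_zero, neg_mul,
    ← neg_add] at this

lemma exists_isPnDominated_extension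
    (hc : ∀ (x : f.domain) (h : L0 μ), f x + h * c ≤ pn μ ((x : N) + h • v)) :
    ∃ g, f ≤ g ∧ IsPnDominated g ∧ ∃ hv : v ∈ g.domain, g ⟨v, hv⟩ = c := by
  have hspan (h : L0 μ) (hv : h • v = 0) : RingHom.id (L0 μ) h • c = 0 := by
    simpa using apply_add_mul_eq_zero hc (x := 0) (h := h) (by simpa using hv)
  let s := LinearPMap.mkSpanSingleton' (σ := RingHom.id (L0 μ)) v c hspan
  have hs (h : L0 μ) (hv : h • v ∈ s.domain) : s ⟨h • v, hv⟩ = h * c :=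
    LinearPMap.mkSpanSingleton'_apply v c hspan h hv
  have hagree (x : f.domain) (y : s.domain) (hxy : (x : N) = y) : f x = s y := by
    obtain ⟨y, hy⟩ := y
    obtain ⟨h, rfl⟩ := Submodule.mem_span_singleton.1 hy
    have := apply_add_mul_eq_zero hc (x := x) (h := -h) (by rw [hxy, neg_smul, add_neg_cancel])
    rwa [neg_mul, add_neg_eq_zero, ← hs h hy] at this
  have hv : v ∈ s.domain := Submodule.mem_span_singleton_self v
  refine ⟨f.sup s hagree, f.left_le_sup s hagree, ?_, (f.right_le_sup s hagree).1 hv, ?_⟩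
  · rintro ⟨z, hz⟩
    obtain ⟨x, hx, y, hy, rfl⟩ := Submodule.mem_sup.1 hz
    obtain ⟨h, rfl⟩ := Submodule.mem_span_singleton.1 hy
    refine (LinearPMap.sup_apply hagree ⟨x, hx⟩ ⟨h • v, hy⟩ ⟨x + h • v, hz⟩ rfl).trans_le ?_
    exact (congrArg (f ⟨x, hx⟩ + ·) (hs h hy)).trans_le (hc ⟨x, hx⟩ h)
  · exact ((f.right_le_sup s hagree).2 (x := ⟨v, hv⟩) rfl).symm.trans
      (LinearPMap.mkSpanSingleton'_apply_self v c hspan hv)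

lemma isPnDominated_sSup {S : Set (N →ₗ.[L0 μ] L0 μ)} (hS : DirectedOn (· ≤ ·) S)
    (hne : S.Nonempty) (h : ∀ f ∈ S, IsPnDominated f) : IsPnDominated (LinearPMap.sSup S hS) := by
  rintro ⟨x, hx⟩
  obtain ⟨f, hfS, hfx⟩ := (LinearPMap.mem_domain_sSup_iff hne hS).1 hx
  exact (LinearPMap.sSup_apply hS hfS ⟨x, hfx⟩).trans_le (h f hfS ⟨x, hfx⟩)

lemma IsPnDominated.exists_le_domain_eq_top [SigmaFinite μ] (hf : IsPnDominated f) :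
    ∃ g, f ≤ g ∧ IsPnDominated g ∧ g.domain = ⊤ := by
  obtain ⟨g, hfg, hg⟩ := zorn_le_nonempty₀ {g : N →ₗ.[L0 μ] L0 μ | IsPnDominated g}
    (fun S hS hchain g hgS => ⟨_, isPnDominated_sSup hchain.directedOn ⟨g, hgS⟩ hS,
      fun _ => LinearPMap.le_sSup _⟩) f hf
  refine ⟨g, hfg, hg.prop, eq_top_iff.2 fun v _ => ?_⟩
  obtain ⟨c, hc⟩ := hg.prop.exists_add_mul_le v
  obtain ⟨g', hgg', hg', hv, -⟩ := exists_isPnDominated_extension hc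
  exact (hg.le_of_ge hg' hgg').1 hv

lemma IsPnDominated.inDualDisc (hf : IsPnDominated f) (htop : f.domain = ⊤) :
    InDualDisc μ (f.toFun ∘ₗ LinearMap.id.codRestrict f.domain fun _ => htop ▸ trivial) := by
  intro v
  have hv : v ∈ f.domain := htop ▸ trivial
  refine abs_le'.2 ⟨hf ⟨v, hv⟩, ?_⟩
  have := hf (-⟨v, hv⟩)
  rwa [LinearPMap.map_neg, Submodule.coe_neg, pn_neg] at this

lemma exists_inDualDisc_apply_eq_pn [SigmaFinite μ] (w : N) :
    ∃ η : N →ₗ[L0 μ] L0 μ, InDualDisc μ η ∧ η w = pn μ w := by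
  have hbot (x : (⊥ : N →ₗ.[L0 μ] L0 μ).domain) (h : L0 μ) :
      (⊥ : N →ₗ.[L0 μ] L0 μ) x + h * pn μ w ≤ pn μ ((x : N) + h • w) := by
    obtain rfl : x = 0 := Subtype.ext ((Submodule.mem_bot _).1 x.2)
    rw [LinearPMap.map_zero, Submodule.coe_zero, zero_add, zero_add, pn_smul]
    exact mul_le_mul_of_nonneg_right (le_abs_self h) (pn_nonneg w)
  obtain ⟨p, -, hp, hw, hpw⟩ := exists_isPnDominated_extension hbot
  obtain ⟨g, hpg, hg, htop⟩ := hp.exists_le_domain_eq_top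
  exact ⟨_, hg.inDualDisc htop, (hpg.2 rfl).symm.trans hpw⟩

end HahnBanach

/-! ### Contraction of a tensor by a functional -/

section Contraction

variable (R M N : Type*) [CommRing R] [AddCommGroup M] [Module R M] [AddCommGroup N] [Module R N]

/-- The contraction `ω ↦ (v ⊗ w ↦ ω(v) • w)` of the left factor of a tensor by a linear form. -/
def leftContraction : Module.Dual R M →ₗ[R] M ⊗[R] N →ₗ[R] N :=
  (TensorProduct.lid R N).toLinearMap.compRight R ∘ₗ LinearMap.rTensorHom N

variable {R M N}

lemma leftContraction_sum_tmul {ι : Type*} [Fintype ι] (ω : Module.Dual R M) (v : ι → M)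
    (w : ι → N) : leftContraction R M N ω (∑ i, v i ⊗ₜ[R] w i) = ∑ i, ω (v i) • w i :=
  map_sum (leftContraction R M N ω) _ _

lemma apply_leftContraction_sum_tmul {ι : Type*} [Fintype ι] (ω : Module.Dual R M)
    (η : Module.Dual R N) (v : ι → M) (w : ι → N) :
    η (leftContraction R M N ω (∑ i, v i ⊗ₜ[R] w i)) = ∑ i, ω (v i) * η (w i) := by
  rw [leftContraction_sum_tmul, map_sum]
  simp only [map_smul, smul_eq_mul]

lemma comm_sum_tmul {ι : Type*} [Fintype ι] (v : ι → M) (w : ι → N) :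
    TensorProduct.comm R M N (∑ i, v i ⊗ₜ[R] w i) = ∑ i, w i ⊗ₜ[R] v i :=
  map_sum (TensorProduct.comm R M N) _ _

lemma exists_eq_sum_fin_tmul (α : M ⊗[R] N) :
    ∃ (n : ℕ) (v : Fin n → M) (w : Fin n → N), α = ∑ i, v i ⊗ₜ[R] w i := by
  obtain ⟨S, rfl⟩ := TensorProduct.exists_finset α
  refine ⟨S.card, fun i => (S.equivFin.symm i).1.1, fun i => (S.equivFin.symm i).1.2, ?_⟩
  rw [← Finset.sum_coe_sort]
  exact (Equiv.sum_comp S.equivFin.symm fun i : S => i.1.1 ⊗ₜ[R] i.1.2).symm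

end Contraction

/-! ### Dual modules -/

section Dual

variable {μ : Measure X} [SFinite μ]
variable {M N : Type*} [AddCommGroup M] [Module (L0 μ) M] [BanachMod μ M]
  [AddCommGroup N] [Module (L0 μ) N] [BanachMod μ N]

lemma InDualDisc.one_mem_dualBddSet {ω : M →ₗ[L0 μ] L0 μ} (hω : InDualDisc μ ω) :
    1 ∈ dualBddSet μ ω :=
  ⟨zero_le_one, fun v => (hω v).trans_eq (one_mul _).symm⟩

lemma InDualDisc.isDual {ω : M →ₗ[L0 μ] L0 μ} (hω : InDualDisc μ ω) : IsDual μ ω :=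
  ⟨1, hω.one_mem_dualBddSet⟩

lemma IsDual.exists_isGLB [SigmaFinite μ] {ω : M →ₗ[L0 μ] L0 μ} (hω : IsDual μ ω) :
    ∃ d, IsGLB (dualBddSet μ ω) d :=
  L0.exists_isGLB hω ⟨0, fun _ hg => hg.1⟩

lemma IsDual.mem_of_isGLB {ω : M →ₗ[L0 μ] L0 μ} (hω : IsDual μ ω) {d : L0 μ}
    (hd : IsGLB (dualBddSet μ ω) d) : d ∈ dualBddSet μ ω :=
  ⟨hd.2 fun _ hg => hg.1, fun v =>
    L0.le_isGLB_mul (fun _ hg => hg.1) hω hd (pn_nonneg v) fun _ hg => hg.2 v⟩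

lemma exists_inDualDisc_eq_smul {ω : M →ₗ[L0 μ] L0 μ} {d : L0 μ} (hd : d ∈ dualBddSet μ ω) :
    ∃ ω', InDualDisc μ ω' ∧ ω = d • ω' := by
  have hpinv : 0 ≤ L0.pinv d := L0.pinv_nonneg hd.1
  refine ⟨L0.pinv d • ω, fun v => ?_, LinearMap.ext fun v => ?_⟩
  · calc |L0.pinv d * ω v| = L0.pinv d * |ω v| := by rw [L0.abs_mul, abs_of_nonneg hpinv]
      _ ≤ L0.pinv d * (d * pn μ v) := mul_le_mul_of_nonneg_left (hd.2 v) hpinv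
      _ = d * L0.pinv d * pn μ v := by ring
      _ ≤ pn μ v := mul_le_of_le_one_left (pn_nonneg v) (L0.mul_pinv_le_one d)
  · have hcompl : 0 ≤ 1 - d * L0.pinv d := sub_nonneg.2 (L0.mul_pinv_le_one d)
    have hzero : |(1 - d * L0.pinv d) * ω v| ≤ 0 :=
      calc |(1 - d * L0.pinv d) * ω v| = (1 - d * L0.pinv d) * |ω v| := by
            rw [L0.abs_mul, abs_of_nonneg hcompl]
        _ ≤ (1 - d * L0.pinv d) * (d * pn μ v) := mul_le_mul_of_nonneg_left (hd.2 v) hcompl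
        _ = (d - d * L0.pinv d * d) * pn μ v := by ring
        _ = 0 := by rw [L0.mul_pinv_mul_self, sub_self, zero_mul]
    have hself := le_antisymm (abs_le'.1 hzero).1 (neg_nonpos.1 (abs_le'.1 hzero).2)
    rwa [sub_mul, one_mul, sub_eq_zero, mul_assoc] at hself

variable (μ M) in
/-- The dual module `ℳ*`, as a submodule of the algebraic dual. -/
def dual : Submodule (L0 μ) (Module.Dual (L0 μ) M) where
  carrier := {ω | IsDual μ ω}
  zero_mem' := InDualDisc.isDual fun v => by simpa using pn_nonneg v
  add_mem' := by
    rintro ω ω' ⟨g, hg, hω⟩ ⟨g', hg', hω'⟩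
    refine ⟨g + g', add_nonneg hg hg', fun v => (abs_add_le _ _).trans ?_⟩
    exact (add_le_add (hω v) (hω' v)).trans_eq (add_mul _ _ _).symm
  smul_mem' := by
    rintro f ω ⟨g, hg, hω⟩
    refine ⟨|f| * g, mul_nonneg (abs_nonneg f) hg, fun v => (L0.abs_mul _ _).trans_le ?_⟩
    exact (mul_le_mul_of_nonneg_left (hω v) (abs_nonneg f)).trans_eq (mul_assoc _ _ _).symm

variable (μ) in
/-- The admissible bounds of a map `ℳ* → 𝒩`, whose infimum is its pointwise norm. The bounds are
tested against the pointwise norm of `ω`, which is the infimum of `dualBddSet μ ω`. -/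
def dualOpBddSet (L : dual μ M → N) : Set (L0 μ) :=
  {g | 0 ≤ g ∧ ∀ (ω : dual μ M) (d : L0 μ), IsGLB (dualBddSet μ ω.1) d → pn μ (L ω) ≤ g * d}

lemma mem_dualOpBddSet_iff [SigmaFinite μ] {L : dual μ M →ₗ[L0 μ] N} {g : L0 μ} :
    g ∈ dualOpBddSet μ L ↔ ∀ ω : dual μ M, InDualDisc μ ω.1 → pn μ (L ω) ≤ g := by
  refine ⟨fun ⟨hg, hL⟩ ω hω => ?_, fun hL => ⟨?_, fun ω d hd => ?_⟩⟩
  · obtain ⟨d, hd⟩ := hω.isDual.exists_isGLB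
    exact (hL ω d hd).trans (mul_le_of_le_one_right hg (hd.1 hω.one_mem_dualBddSet))
  · exact (pn_nonneg _).trans (hL 0 fun v => by simpa using pn_nonneg v)
  · have hd' := IsDual.mem_of_isGLB ω.2 hd
    obtain ⟨ω', hω', heq⟩ := exists_inDualDisc_eq_smul hd'
    obtain rfl : ω = d • (⟨ω', hω'.isDual⟩ : dual μ M) := Subtype.ext heq
    rw [map_smul, pn_smul_of_nonneg hd'.1, mul_comm]
    exact mul_le_mul_of_nonneg_right (hL _ hω') hd'.1

lemma add_mem_dualOpBddSet {S T : dual μ M → N} {g h : L0 μ} (hg : g ∈ dualOpBddSet μ S)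
    (hh : h ∈ dualOpBddSet μ T) : g + h ∈ dualOpBddSet μ (S + T) := by
  refine ⟨add_nonneg hg.1 hh.1, fun ω d hd => (pn_add_le _ _).trans ?_⟩
  exact (add_le_add (hg.2 ω d hd) (hh.2 ω d hd)).trans_eq (add_mul _ _ _).symm

end Dual

/-! ### The operators associated with a tensor -/

section Operators

variable {μ : Measure X} [SFinite μ]
variable {M N E : Type*} [AddCommGroup M] [Module (L0 μ) M] [BanachMod μ M]
  [AddCommGroup N] [Module (L0 μ) N]

variable (μ M N) in
/-- The map `α ↦ L_α`. The operators `R_α` are obtained from it by exchanging the factors. -/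
def leftOperator : M ⊗[L0 μ] N →ₗ[L0 μ] dual μ M →ₗ[L0 μ] N :=
  ((leftContraction (L0 μ) M N).domRestrict (dual μ M)).flip

lemma leftOperator_sum_tmul {ι : Type*} [Fintype ι] (v : ι → M) (w : ι → N) (ω : dual μ M) :
    leftOperator μ M N (∑ i, v i ⊗ₜ[L0 μ] w i) ω = ∑ i, ω.1 (v i) • w i :=
  leftContraction_sum_tmul ω.1 v w

variable [BanachMod μ N] [AddCommGroup E] [Module (L0 μ) E] [BanachMod μ E]

lemma mem_upperBounds_epsReps_iff [SigmaFinite μ] {α : M ⊗[L0 μ] N} {g : L0 μ} :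
    g ∈ upperBounds (epsReps μ α) ↔
      ∀ ω, InDualDisc μ ω → pn μ (leftContraction (L0 μ) M N ω α) ≤ g := by
  constructor
  · intro hg ω hω
    obtain ⟨η, hη, hηα⟩ := exists_inDualDisc_apply_eq_pn (μ := μ)
      (leftContraction (L0 μ) M N ω α)
    obtain ⟨n, v, w, rfl⟩ := exists_eq_sum_fin_tmul α
    refine hg ⟨n, v, w, ω, η, hω, hη, rfl, ?_⟩
    rw [← apply_leftContraction_sum_tmul, hηα, abs_of_nonneg (pn_nonneg _)]
  · rintro hg _ ⟨n, v, w, ω, η, hω, hη, rfl, rfl⟩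
    rw [← apply_leftContraction_sum_tmul]
    exact (hη _).trans (hg ω hω)

lemma dualOpBddSet_leftOperator [SigmaFinite μ] (α : M ⊗[L0 μ] N) :
    dualOpBddSet μ (leftOperator μ M N α) = upperBounds (epsReps μ α) := by
  ext g
  rw [mem_dualOpBddSet_iff, mem_upperBounds_epsReps_iff]
  exact ⟨fun h ω hω => h ⟨ω, hω.isDual⟩ hω, fun h ω hω => h ω.1 hω⟩

lemma setOf_pn_sum_smul_le_eq_upperBounds [SigmaFinite μ] {n : ℕ} (v : Fin n → M)
    (w : Fin n → N) :
    {g : L0 μ | 0 ≤ g ∧ ∀ (ω : M →ₗ[L0 μ] L0 μ) (d : L0 μ), IsDual μ ω →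
      IsGLB (dualBddSet μ ω) d → pn μ (∑ i, ω (v i) • w i) ≤ g * d} =
      upperBounds (epsReps μ (∑ i, v i ⊗ₜ[L0 μ] w i)) := by
  rw [← dualOpBddSet_leftOperator]
  ext g
  simp only [dualOpBddSet, leftOperator_sum_tmul]
  exact and_congr_right fun _ => ⟨fun h ω d hd => h ω.1 d ω.2 hd, fun h ω d hω => h ⟨ω, hω⟩ d⟩

section Extension

variable [SigmaFinite μ] {e : M ⊗[L0 μ] N →ₗ[L0 μ] E}

lemma IsEpsTensor.pn_mem_dualOpBddSet (hE : IsEpsTensor μ M N E e) (α : M ⊗[L0 μ] N) :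
    pn μ (e α) ∈ dualOpBddSet μ (leftOperator μ M N α) := by
  rw [dualOpBddSet_leftOperator]
  exact (hE.pn_emb α).1

lemma IsEpsTensor.exists_extension_apply (hE : IsEpsTensor μ M N E e) (ω : dual μ M) :
    ∃ S : E →ₗ[L0 μ] N, (∀ α, S (e α) = leftOperator μ M N α ω) ∧
      ∃ d, IsGLB (dualBddSet μ ω.1) d ∧ d ∈ homBddSet μ S := by
  obtain ⟨d, hd⟩ := IsDual.exists_isGLB ω.2
  obtain ⟨S, hS, hSd⟩ := exists_extension hE.dense ((leftOperator μ M N).flip ω)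
    (IsDual.mem_of_isGLB ω.2 hd).1 fun α =>
      ((hE.pn_mem_dualOpBddSet α).2 ω d hd).trans_eq (mul_comm _ _)
  exact ⟨S, hS, d, hd, hSd⟩

lemma IsEpsTensor.exists_leftOperator_extension (hE : IsEpsTensor μ M N E e) :
    ∃ L : E →ₗ[L0 μ] dual μ M →ₗ[L0 μ] N, (∀ α, L (e α) = leftOperator μ M N α) ∧
      ∀ p, pn μ p ∈ dualOpBddSet μ (L p) := by
  choose S hS d hd hSd using hE.exists_extension_apply
  have hadd (ω ω' : dual μ M) : (S (ω + ω')).toAddMonoidHom = (S ω + S ω').toAddMonoidHom :=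
    eq_of_eqOn_dense hE.dense (hSd _) (add_mem_homBddSet (hSd ω) (hSd ω')) fun α => by
      simp [hS]
  have hsmul (f : L0 μ) (ω : dual μ M) : (S (f • ω)).toAddMonoidHom = (f • S ω).toAddMonoidHom :=
    eq_of_eqOn_dense hE.dense (hSd _) (smul_mem_homBddSet f (hSd ω)) fun α => by
      simp [hS]
  refine ⟨LinearMap.mk₂ (L0 μ) (fun p ω => S ω p) (fun p q ω => map_add _ _ _)
    (fun f p ω => map_smul _ _ _) (fun p ω ω' => DFunLike.congr_fun (hadd ω ω') p)
    (fun f p ω => DFunLike.congr_fun (hsmul f ω) p), fun α => LinearMap.ext fun ω => hS ω α,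
    fun p => ⟨pn_nonneg p, fun ω c hc => ?_⟩⟩
  rw [hc.unique (hd ω), mul_comm]
  exact (hSd ω).2 p

/-- On the dense image of `e` this is `|L_α| = |α|_ε`; in general `p` is approximated by some
`e α`, and `|L_α| ≤ |L_p| + |α - p|`. -/
lemma IsEpsTensor.isGLB_dualOpBddSet (hE : IsEpsTensor μ M N E e)
    {L : E →ₗ[L0 μ] dual μ M →ₗ[L0 μ] N} (hL : ∀ α, L (e α) = leftOperator μ M N α)
    (hbdd : ∀ p, pn μ p ∈ dualOpBddSet μ (L p)) (p : E) :
    IsGLB (dualOpBddSet μ (L p)) (pn μ p) := by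
  refine IsLeast.isGLB ⟨hbdd p, fun g hg => pn_le_of_forall_dense hE.dense fun α => ?_⟩
  refine (hE.pn_emb α).2 ?_
  have hadd : L p + L (e α - p) = leftOperator μ M N α := by
    rw [← map_add, add_sub_cancel, hL]
  rw [← dualOpBddSet_leftOperator, ← hadd]
  exact add_mem_dualOpBddSet hg (hbdd (e α - p))

lemma IsEpsTensor.eq_leftOperator_extension (hE : IsEpsTensor μ M N E e)
    {L : E →ₗ[L0 μ] dual μ M →ₗ[L0 μ] N} (hL : ∀ α, L (e α) = leftOperator μ M N α)
    (hbdd : ∀ p, pn μ p ∈ dualOpBddSet μ (L p)) {L₂ : E → dual μ M → N}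
    (hL₂ : ∀ (n : ℕ) (v : Fin n → M) (w : Fin n → N) (ω : dual μ M),
      L₂ (e (∑ i, v i ⊗ₜ[L0 μ] w i)) ω = ∑ i, ω.1 (v i) • w i)
    (hadd : ∀ p q ω, L₂ (p + q) ω = L₂ p ω + L₂ q ω)
    (hbdd₂ : ∀ (p : E) (ω : dual μ M) (d : L0 μ),
      IsGLB (dualBddSet μ ω.1) d → pn μ (L₂ p ω) ≤ pn μ p * d) :
    L₂ = fun p ω => L p ω := by
  funext p ω
  obtain ⟨d, hd⟩ := IsDual.exists_isGLB ω.2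
  have hd₀ := (IsDual.mem_of_isGLB ω.2 hd).1
  refine DFunLike.congr_fun (eq_of_eqOn_dense hE.dense (g := d) (h := d)
    (S := AddMonoidHom.mk' (L₂ · ω) fun p q => hadd p q ω) (T := (L.flip ω).toAddMonoidHom)
    ⟨hd₀, fun q => (hbdd₂ q ω d hd).trans_eq (mul_comm _ _)⟩
    ⟨hd₀, fun q => ((hbdd q).2 ω d hd).trans_eq (mul_comm _ _)⟩ fun α => ?_) p
  obtain ⟨n, v, w, rfl⟩ := exists_eq_sum_fin_tmul α
  exact (hL₂ n v w ω).trans ((leftOperator_sum_tmul v w ω).symm.trans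
    (DFunLike.congr_fun (hL _).symm ω))

end Extension

lemma epsReps_subset_epsReps_comm (α : M ⊗[L0 μ] N) :
    epsReps μ α ⊆ epsReps μ (TensorProduct.comm (L0 μ) M N α) := by
  rintro _ ⟨n, v, w, ω, η, hω, hη, rfl, rfl⟩
  exact ⟨n, w, v, η, ω, hη, hω, comm_sum_tmul v w, by simp only [mul_comm]⟩

lemma epsReps_comm (α : M ⊗[L0 μ] N) :
    epsReps μ (TensorProduct.comm (L0 μ) M N α) = epsReps μ α := by
  refine Subset.antisymm ?_ (epsReps_subset_epsReps_comm α)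
  simpa only [TensorProduct.comm_comm] using
    epsReps_subset_epsReps_comm (TensorProduct.comm (L0 μ) M N α)

lemma IsEpsTensor.comp_comm {e : M ⊗[L0 μ] N →ₗ[L0 μ] E} (hE : IsEpsTensor μ M N E e) :
    IsEpsTensor μ N M E (e ∘ₗ (TensorProduct.comm (L0 μ) N M).toLinearMap) where
  pn_emb α := by
    rw [← epsReps_comm]
    exact hE.pn_emb _
  dense p ε hε := by
    obtain ⟨α, hα⟩ := hE.dense p ε hε
    exact ⟨TensorProduct.comm (L0 μ) M N α, by simpa using hα⟩

end Operators

set_option maxHeartbeats 1000000 in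

/-- For a tensor `α = ∑_{i=1}^n v_i ⊗ w_i ∈ ℳ ⊗ 𝒩`, the operators
`L_α(ω) := ∑ ω(v_i) • w_i` and `R_α(η) := ∑ η(w_i) • v_i` are well defined (independent of
the representation), belong to `Hom(ℳ*;𝒩)` resp. `Hom(𝒩*;ℳ)` with `|L_α| = |R_α| = |α|_ε`,
and extend uniquely to pointwise-norm-preserving homomorphisms on `ℳ ⊗̂_ε 𝒩` (realized by
`E`). The pointwise norm of an element of `Hom(ℳ*;𝒩)` is the infimum of the set of bounds
`g` with `|L(ω)| ≤ g |ω|` for all `ω ∈ ℳ*`, `|ω|` being the infimum of `dualBddSet μ ω`. -/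
theorem left_right_operators_of_tensors
    (μ : Measure X) [SigmaFinite μ]
    (M : Type*) [AddCommGroup M] [Module (L0 μ) M] [BanachMod μ M]
    (N : Type*) [AddCommGroup N] [Module (L0 μ) N] [BanachMod μ N]
    (E : Type*) [AddCommGroup E] [Module (L0 μ) E] [BanachMod μ E]
    (e : M ⊗[L0 μ] N →ₗ[L0 μ] E) (hE : IsEpsTensor μ M N E e) :
    -- (1) `L_α` is well defined
    (∀ (n m : ℕ) (v : Fin n → M) (w : Fin n → N) (v' : Fin m → M) (w' : Fin m → N),
      (∑ i, v i ⊗ₜ[L0 μ] w i) = (∑ j, v' j ⊗ₜ[L0 μ] w' j) →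
      ∀ ω : M →ₗ[L0 μ] L0 μ, IsDual μ ω → (∑ i, ω (v i) • w i) = ∑ j, ω (v' j) • w' j)
    -- (2) `R_α` is well defined
    ∧ (∀ (n m : ℕ) (v : Fin n → M) (w : Fin n → N) (v' : Fin m → M) (w' : Fin m → N),
      (∑ i, v i ⊗ₜ[L0 μ] w i) = (∑ j, v' j ⊗ₜ[L0 μ] w' j) →
      ∀ η : N →ₗ[L0 μ] L0 μ, IsDual μ η → (∑ i, η (w i) • v i) = ∑ j, η (w' j) • v' j)
    -- (3) `L_α ∈ Hom(ℳ*;𝒩)` and `|L_α| = |α|_ε`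
    ∧ (∀ (n : ℕ) (v : Fin n → M) (w : Fin n → N) (b : L0 μ),
        IsLUB (epsReps μ (∑ i, v i ⊗ₜ[L0 μ] w i)) b →
        b ∈ {g : L0 μ | 0 ≤ g ∧ ∀ (ω : M →ₗ[L0 μ] L0 μ) (dω : L0 μ), IsDual μ ω →
            IsGLB (dualBddSet μ ⇑ω) dω → pn μ (∑ i, ω (v i) • w i) ≤ g * dω} ∧
        IsGLB {g : L0 μ | 0 ≤ g ∧ ∀ (ω : M →ₗ[L0 μ] L0 μ) (dω : L0 μ), IsDual μ ω →
            IsGLB (dualBddSet μ ⇑ω) dω → pn μ (∑ i, ω (v i) • w i) ≤ g * dω} b)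
    -- (4) `R_α ∈ Hom(𝒩*;ℳ)` and `|R_α| = |α|_ε`
    ∧ (∀ (n : ℕ) (v : Fin n → M) (w : Fin n → N) (b : L0 μ),
        IsLUB (epsReps μ (∑ i, v i ⊗ₜ[L0 μ] w i)) b →
        b ∈ {g : L0 μ | 0 ≤ g ∧ ∀ (η : N →ₗ[L0 μ] L0 μ) (dη : L0 μ), IsDual μ η →
            IsGLB (dualBddSet μ ⇑η) dη → pn μ (∑ i, η (w i) • v i) ≤ g * dη} ∧
        IsGLB {g : L0 μ | 0 ≤ g ∧ ∀ (η : N →ₗ[L0 μ] L0 μ) (dη : L0 μ), IsDual μ η →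
            IsGLB (dualBddSet μ ⇑η) dη → pn μ (∑ i, η (w i) • v i) ≤ g * dη} b)
    -- (5) unique pointwise-norm-preserving extension of `α ↦ L_α` to `ℳ ⊗̂_ε 𝒩`
    ∧ (∃ Lext : E → {ω : M →ₗ[L0 μ] L0 μ // IsDual μ ω} → N,
        (∀ (n : ℕ) (v : Fin n → M) (w : Fin n → N)
            (ω : {ω : M →ₗ[L0 μ] L0 μ // IsDual μ ω}),
          Lext (e (∑ i, v i ⊗ₜ[L0 μ] w i)) ω = ∑ i, ω.1 (v i) • w i)
        ∧ (∀ (p q : E) (ω : {ω : M →ₗ[L0 μ] L0 μ // IsDual μ ω}),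
            Lext (p + q) ω = Lext p ω + Lext q ω)
        ∧ (∀ (f : L0 μ) (p : E) (ω : {ω : M →ₗ[L0 μ] L0 μ // IsDual μ ω}),
            Lext (f • p) ω = f • Lext p ω)
        ∧ (∀ (p : E) (ω ω' : {ω : M →ₗ[L0 μ] L0 μ // IsDual μ ω})
            (h : IsDual μ (ω.1 + ω'.1)),
            Lext p ⟨ω.1 + ω'.1, h⟩ = Lext p ω + Lext p ω')
        ∧ (∀ (p : E) (ω : {ω : M →ₗ[L0 μ] L0 μ // IsDual μ ω}) (f : L0 μ)
            (hf : IsDual μ (f • ω.1)),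
            Lext p ⟨f • ω.1, hf⟩ = f • Lext p ω)
        ∧ (∀ p : E, IsGLB {g : L0 μ | 0 ≤ g ∧
            ∀ (ω : {ω : M →ₗ[L0 μ] L0 μ // IsDual μ ω}) (dω : L0 μ),
              IsGLB (dualBddSet μ (fun v => ω.1 v)) dω → pn μ (Lext p ω) ≤ g * dω}
            (pn μ p))
        ∧ (∀ L₂ : E → {ω : M →ₗ[L0 μ] L0 μ // IsDual μ ω} → N,
            (∀ (n : ℕ) (v : Fin n → M) (w : Fin n → N)
                (ω : {ω : M →ₗ[L0 μ] L0 μ // IsDual μ ω}),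
              L₂ (e (∑ i, v i ⊗ₜ[L0 μ] w i)) ω = ∑ i, ω.1 (v i) • w i) →
            (∀ (p q : E) (ω : {ω : M →ₗ[L0 μ] L0 μ // IsDual μ ω}),
              L₂ (p + q) ω = L₂ p ω + L₂ q ω) →
            (∀ (p : E) (ω : {ω : M →ₗ[L0 μ] L0 μ // IsDual μ ω}) (dω : L0 μ),
              IsGLB (dualBddSet μ (fun v => ω.1 v)) dω → pn μ (L₂ p ω) ≤ pn μ p * dω) →
            L₂ = Lext))
    -- (6) unique pointwise-norm-preserving extension of `α ↦ R_α` to `ℳ ⊗̂_ε 𝒩`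
    ∧ (∃ Rext : E → {η : N →ₗ[L0 μ] L0 μ // IsDual μ η} → M,
        (∀ (n : ℕ) (v : Fin n → M) (w : Fin n → N)
            (η : {η : N →ₗ[L0 μ] L0 μ // IsDual μ η}),
          Rext (e (∑ i, v i ⊗ₜ[L0 μ] w i)) η = ∑ i, η.1 (w i) • v i)
        ∧ (∀ (p q : E) (η : {η : N →ₗ[L0 μ] L0 μ // IsDual μ η}),
            Rext (p + q) η = Rext p η + Rext q η)
        ∧ (∀ (f : L0 μ) (p : E) (η : {η : N →ₗ[L0 μ] L0 μ // IsDual μ η}),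
            Rext (f • p) η = f • Rext p η)
        ∧ (∀ (p : E) (η η' : {η : N →ₗ[L0 μ] L0 μ // IsDual μ η})
            (h : IsDual μ (η.1 + η'.1)),
            Rext p ⟨η.1 + η'.1, h⟩ = Rext p η + Rext p η')
        ∧ (∀ (p : E) (η : {η : N →ₗ[L0 μ] L0 μ // IsDual μ η}) (f : L0 μ)
            (hf : IsDual μ (f • η.1)),
            Rext p ⟨f • η.1, hf⟩ = f • Rext p η)
        ∧ (∀ p : E, IsGLB {g : L0 μ | 0 ≤ g ∧
            ∀ (η : {η : N →ₗ[L0 μ] L0 μ // IsDual μ η}) (dη : L0 μ),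
              IsGLB (dualBddSet μ (fun w => η.1 w)) dη → pn μ (Rext p η) ≤ g * dη}
            (pn μ p))
        ∧ (∀ R₂ : E → {η : N →ₗ[L0 μ] L0 μ // IsDual μ η} → M,
            (∀ (n : ℕ) (v : Fin n → M) (w : Fin n → N)
                (η : {η : N →ₗ[L0 μ] L0 μ // IsDual μ η}),
              R₂ (e (∑ i, v i ⊗ₜ[L0 μ] w i)) η = ∑ i, η.1 (w i) • v i) →
            (∀ (p q : E) (η : {η : N →ₗ[L0 μ] L0 μ // IsDual μ η}),
              R₂ (p + q) η = R₂ p η + R₂ q η) →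
            (∀ (p : E) (η : {η : N →ₗ[L0 μ] L0 μ // IsDual μ η}) (dη : L0 μ),
              IsGLB (dualBddSet μ (fun w => η.1 w)) dη → pn μ (R₂ p η) ≤ pn μ p * dη) →
            R₂ = Rext)) := by
  obtain ⟨L, hL, hLbdd⟩ := hE.exists_leftOperator_extension
  obtain ⟨R, hR, hRbdd⟩ := hE.comp_comm.exists_leftOperator_extension
  refine ⟨fun n m v w v' w' h ω _ => ?_, fun n m v w v' w' h η _ => ?_, fun n v w b hb => ?_,
    fun n v w b hb => ?_,
    ⟨fun p ω => L p ω, fun n v w ω => ?_, L.map_add₂, L.map_smul₂,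
      fun p ω ω' _ => (L p).map_add ω ω', fun p ω f _ => (L p).map_smul f ω,
      hE.isGLB_dualOpBddSet hL hLbdd, fun _ => hE.eq_leftOperator_extension hL hLbdd⟩,
    ⟨fun p η => R p η, fun n v w η => ?_, R.map_add₂, R.map_smul₂,
      fun p η η' _ => (R p).map_add η η', fun p η f _ => (R p).map_smul f η,
      hE.comp_comm.isGLB_dualOpBddSet hR hRbdd, fun R₂ hR₂ =>
        hE.comp_comm.eq_leftOperator_extension hR hRbdd fun n w v η => ?_⟩⟩
  · rw [← leftContraction_sum_tmul, h, leftContraction_sum_tmul]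
  · rw [← leftContraction_sum_tmul, ← comm_sum_tmul, h, comm_sum_tmul, leftContraction_sum_tmul]
  · rw [setOf_pn_sum_smul_le_eq_upperBounds]
    exact ⟨hb.1, IsLeast.isGLB hb⟩
  · rw [setOf_pn_sum_smul_le_eq_upperBounds, ← comm_sum_tmul, epsReps_comm]
    exact ⟨hb.1, IsLeast.isGLB hb⟩
  · exact (DFunLike.congr_fun (hL _) ω).trans (leftOperator_sum_tmul v w ω)
  · rw [← leftOperator_sum_tmul w v η, ← hR, ← comm_sum_tmul w v]
    rfl
  · rw [← hR₂ n v w η, ← comm_sum_tmul w v]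
    rfl

end Paper
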